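/- Assume hypotheses (H1) and (H2). If X_α is an optimal solution of Problem 2.1, then X_α is also an optimal solution of Problem (4.3), i.e. E_{λQ_α^c}[X_α] = sup_{X ∈ 𝒳_α} E_{λQ_α^c}[X] = γ_α^c. -/

import Mathlib

open MeasureTheory Filter Topology
open scoped ENNReal

/-- `X` belongs to the space `𝒳` of bounded measurable real-valued functions on `Ω`. -/
def MemX {Ω : Type*} [MeasurableSpace Ω] (X : Ω → ℝ) : Prop :=
  Measurable X ∧ ∃ M : ℝ, ∀ ω, |X ω| ≤ M

/-- A sublinear operator on `𝒳`: monotone, constant preserving, subadditive and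
positively homogeneous. -/
def IsSublinearOp {Ω : Type*} [MeasurableSpace Ω] (ρ : (Ω → ℝ) → ℝ) : Prop :=
  (∀ X Y : Ω → ℝ, MemX X → MemX Y → (∀ ω, Y ω ≤ X ω) → ρ Y ≤ ρ X) ∧
  (∀ c : ℝ, ρ (fun _ => c) = c) ∧
  (∀ X Y : Ω → ℝ, MemX X → MemX Y → ρ (X + Y) ≤ ρ X + ρ Y) ∧
  (∀ c : ℝ, 0 ≤ c → ∀ X : Ω → ℝ, MemX X → ρ (c • X) = c * ρ X)

/-- A linear functional on `𝒳`. -/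
def IsLinearOp {Ω : Type*} [MeasurableSpace Ω] (L : (Ω → ℝ) → ℝ) : Prop :=
  (∀ X Y : Ω → ℝ, MemX X → MemX Y → L (X + Y) = L X + L Y) ∧
  (∀ (c : ℝ) (X : Ω → ℝ), MemX X → L (c • X) = c * L X)

/-- `L` is dominated by `ρ` on `𝒳`. -/
def Dominated {Ω : Type*} [MeasurableSpace Ω] (L ρ : (Ω → ℝ) → ℝ) : Prop :=
  ∀ X : Ω → ℝ, MemX X → L X ≤ ρ X

/-- The conjugate operator `E_ῡ[X] := -E_υ[-X]`. -/
def conjOp {Ω : Type*} (ρ : (Ω → ℝ) → ℝ) : (Ω → ℝ) → ℝ := fun X => -ρ (-X)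

/-- The set `𝒳_α` of test functions at significance level `α`. -/
def testSet {Ω : Type*} [MeasurableSpace Ω] (Emu : (Ω → ℝ) → ℝ) (α : ℝ) : Set (Ω → ℝ) :=
  {X | MemX X ∧ (∀ ω, 0 ≤ X ω ∧ X ω ≤ 1) ∧ Emu X ≤ α}

/-- A positive normalized linear functional `Qp` is *pure additive* if there is a
sequence of measurable sets `A n ↓ ∅` with `Qp(1_{A n}) → 1`. -/
def PureAdditive {Ω : Type*} [MeasurableSpace Ω] (Qp : (Ω → ℝ) → ℝ) : Prop :=
  ∃ A : ℕ → Set Ω, (∀ n, MeasurableSet (A n)) ∧ Antitone A ∧ (⋂ n, A n) = ∅ ∧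
    Tendsto (fun n => Qp ((A n).indicator fun _ => (1 : ℝ))) atTop (𝓝 1)

/-- Hypothesis (H1): for every sequence of measurable sets `A n ↓ ∅` such that
`lim E_υ[1_{A n}]` exists and is nonzero, one has `lim E_μ[1_{A n}] = 0`. -/
def HypH1 {Ω : Type*} [MeasurableSpace Ω] (Emu Eups : (Ω → ℝ) → ℝ) : Prop :=
  ∀ A : ℕ → Set Ω, (∀ n, MeasurableSet (A n)) → Antitone A → (⋂ n, A n) = ∅ →
    ∀ l : ℝ, Tendsto (fun n => Eups ((A n).indicator fun _ => (1 : ℝ))) atTop (𝓝 l) →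
      l ≠ 0 →
      Tendsto (fun n => Emu ((A n).indicator fun _ => (1 : ℝ))) atTop (𝓝 0)

/-- Hypothesis (H2): for every `X ∈ 𝒳_α` with `E_μ[X] > 0` and every positive
integer `K`, `E_μ[X] > E_μ[(X - 1/K)⁺]`. -/
def HypH2 {Ω : Type*} [MeasurableSpace Ω] (Emu : (Ω → ℝ) → ℝ) (α : ℝ) : Prop :=
  ∀ X ∈ testSet Emu α, 0 < Emu X → ∀ K : ℕ, 0 < K →
    Emu (fun ω => max (X ω - 1 / (K : ℝ)) 0) < Emu X

/-- Hypothesis (H3): for every sequence of measurable sets `A n ↓ ∅`,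
`lim E_μ[1_{A n}] < 1` and `lim E_υ[1_{A n}] < 1`. -/
def HypH3 {Ω : Type*} [MeasurableSpace Ω] (Emu Eups : (Ω → ℝ) → ℝ) : Prop :=
  ∀ A : ℕ → Set Ω, (∀ n, MeasurableSet (A n)) → Antitone A → (⋂ n, A n) = ∅ →
    (∀ l : ℝ, Tendsto (fun n => Emu ((A n).indicator fun _ => (1 : ℝ))) atTop (𝓝 l) →
      l < 1) ∧
    (∀ l : ℝ, Tendsto (fun n => Eups ((A n).indicator fun _ => (1 : ℝ))) atTop (𝓝 l) →
      l < 1)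

/-!
Since `Q_α ≤ E_υ`, also `E_ῡ ≤ Q_α`, so equality of the two suprema makes `X_α` a maximizer of
`Q_α` over `𝒳_α`. Let `λ < 1` and let `A n ↓ ∅` carry the pure additive part `Q_α^p`. The limit of
`E_υ[1_{A n}]` is at least `1 - λ > 0`, so (H1) gives `ε n := E_μ[1_{A n}] / α → 0`. For `X ∈ 𝒳_α`
the function `(1 - ε n) X ⊔ 1_{A n}` is again in `𝒳_α`. Its countably additive part is at least
`1 - ε n` times that of `X`, and its pure additive part is at least `Q_α^p(1_{A n}) → 1`, the
largest value possible on `𝒳_α`. As `X_α` maximizes the weighted sum of the two parts, letting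
`n → ∞` shows that the countably additive part of `X` is at most that of `X_α`.
-/

theorem indicator_one_mem_Icc {Ω : Type*} (A : Set Ω) (ω : Ω) :
    A.indicator (fun _ => (1 : ℝ)) ω ∈ Set.Icc 0 1 :=
  ⟨Set.indicator_nonneg (fun _ _ => zero_le_one) ω,
    Set.indicator_le_self' (fun _ _ => zero_le_one) ω⟩

section

variable {Ω : Type*} [MeasurableSpace Ω]

theorem memX_of_mem_Icc {X : Ω → ℝ} {a b : ℝ} (hX : Measurable X)
    (hab : ∀ ω, X ω ∈ Set.Icc a b) : MemX X :=
  ⟨hX, max |a| |b|, fun ω => abs_le_max_abs_abs (hab ω).1 (hab ω).2⟩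

theorem memX_const (c : ℝ) : MemX (fun _ : Ω => c) :=
  ⟨measurable_const, |c|, fun _ => le_rfl⟩

theorem memX_indicator_one {A : Set Ω} (hA : MeasurableSet A) :
    MemX (A.indicator fun _ => (1 : ℝ)) :=
  memX_of_mem_Icc (measurable_const.indicator hA) (indicator_one_mem_Icc A)

namespace MemX

variable {X Y : Ω → ℝ}

theorem add (hX : MemX X) (hY : MemX Y) : MemX (X + Y) := by
  obtain ⟨hXm, M, hM⟩ := hX
  obtain ⟨hYm, N, hN⟩ := hY
  exact ⟨hXm.add hYm, M + N, fun ω => (abs_add_le _ _).trans (add_le_add (hM ω) (hN ω))⟩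

theorem const_smul (hX : MemX X) (c : ℝ) : MemX (c • X) := by
  obtain ⟨hXm, M, hM⟩ := hX
  refine ⟨hXm.const_smul c, |c| * M, fun ω => ?_⟩
  rw [Pi.smul_apply, smul_eq_mul, abs_mul]
  exact mul_le_mul_of_nonneg_left (hM ω) (abs_nonneg c)

theorem neg (hX : MemX X) : MemX (-X) := by
  simpa using hX.const_smul (-1)

theorem integrable (hX : MemX X) (μ : Measure Ω) [IsFiniteMeasure μ] : Integrable X μ := by
  obtain ⟨hXm, M, hM⟩ := hX
  exact .of_bound hXm.aestronglyMeasurable M (.of_forall hM)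

end MemX

namespace IsSublinearOp

variable {ρ : (Ω → ℝ) → ℝ}

theorem monotoneOn (hρ : IsSublinearOp ρ) : MonotoneOn ρ {X | MemX X} :=
  fun X hX Y hY hXY => hρ.1 Y X hY hX hXY

theorem nonneg (hρ : IsSublinearOp ρ) {X : Ω → ℝ} (hX : MemX X) (h0 : ∀ ω, 0 ≤ X ω) :
    0 ≤ ρ X :=
  (hρ.2.1 0).ge.trans (hρ.monotoneOn (memX_const 0) hX h0)

end IsSublinearOp

theorem IsLinearOp.map_neg {L : (Ω → ℝ) → ℝ} (hL : IsLinearOp L) {X : Ω → ℝ} (hX : MemX X) :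
    L (-X) = -L X := by
  simpa using hL.2 (-1) X hX

/-- Positive linear functionals on `𝒳`. They serve both as the countably additive and as the pure
additive part of `Q_α`; no normalization is imposed. -/
structure IsPositiveLinearOp (L : (Ω → ℝ) → ℝ) : Prop where
  isLinearOp : IsLinearOp L
  nonneg : ∀ X : Ω → ℝ, MemX X → (∀ ω, 0 ≤ X ω) → 0 ≤ L X

namespace IsPositiveLinearOp

variable {L : (Ω → ℝ) → ℝ}

theorem monotoneOn (hL : IsPositiveLinearOp L) : MonotoneOn L {X | MemX X} := by
  intro X (hX : MemX X) Y (hY : MemX Y) hXY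
  have hdiff : MemX (Y + -X) := hY.add hX.neg
  have hpos : 0 ≤ L (Y + -X) :=
    hL.nonneg _ hdiff fun ω => le_add_neg_iff_add_le.2 (by simpa using hXY ω)
  rw [hL.isLinearOp.1 _ _ hY hX.neg, hL.isLinearOp.map_neg hX] at hpos
  linarith

theorem const_mul (hL : IsPositiveLinearOp L) {c : ℝ} (hc : 0 ≤ c) :
    IsPositiveLinearOp fun X => c * L X where
  isLinearOp :=
    ⟨fun X Y hX hY => by simp only [hL.isLinearOp.1 X Y hX hY, mul_add],
      fun a X hX => by simp only [hL.isLinearOp.2 a X hX, mul_left_comm]⟩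
  nonneg X hX h0 := mul_nonneg hc (hL.nonneg X hX h0)

end IsPositiveLinearOp

theorem isPositiveLinearOp_integral (μ : Measure Ω) [IsFiniteMeasure μ] :
    IsPositiveLinearOp fun X => ∫ ω, X ω ∂μ where
  isLinearOp :=
    ⟨fun _ _ hX hY => integral_add (hX.integrable μ) (hY.integrable μ),
      fun c X _ => integral_const_mul c X⟩
  nonneg _ _ h0 := integral_nonneg h0

theorem smul_sup_mem_testSet {E : (Ω → ℝ) → ℝ} (hE : IsSublinearOp E) {α ε : ℝ}
    (hε0 : 0 ≤ ε) (hε1 : ε ≤ 1) {X I : Ω → ℝ} (hX : X ∈ testSet E α) (hI : MemX I)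
    (hI01 : ∀ ω, I ω ∈ Set.Icc 0 1) (hEI : E I ≤ ε * α) :
    (1 - ε) • X ⊔ I ∈ testSet E α := by
  obtain ⟨hXmem, hX01, hEX⟩ := hX
  have hδ : 0 ≤ 1 - ε := sub_nonneg.2 hε1
  have hsX : MemX ((1 - ε) • X) := hXmem.const_smul _
  have hsX0 (ω : Ω) : 0 ≤ ((1 - ε) • X) ω := mul_nonneg hδ (hX01 ω).1
  have hsX1 (ω : Ω) : ((1 - ε) • X) ω ≤ 1 :=
    mul_le_one₀ (sub_le_self 1 hε0) (hX01 ω).1 (hX01 ω).2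
  have hY01 (ω : Ω) : ((1 - ε) • X ⊔ I) ω ∈ Set.Icc 0 1 :=
    ⟨le_sup_of_le_left (hsX0 ω), sup_le (hsX1 ω) (hI01 ω).2⟩
  have hY : MemX ((1 - ε) • X ⊔ I) := memX_of_mem_Icc (hsX.1.sup hI.1) hY01
  refine ⟨hY, hY01, ?_⟩
  calc E ((1 - ε) • X ⊔ I)
      ≤ E ((1 - ε) • X + I) :=
        hE.monotoneOn hY (hsX.add hI) <|
          sup_le (le_add_of_nonneg_right fun ω => (hI01 ω).1) (le_add_of_nonneg_left hsX0)
    _ ≤ E ((1 - ε) • X) + E I := hE.2.2.1 _ _ hsX hI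
    _ = (1 - ε) * E X + E I := by rw [hE.2.2.2 _ hδ X hXmem]
    _ ≤ (1 - ε) * α + ε * α := by gcongr
    _ = α := by ring

/-- The sequence `I` plays the role of `1_{A n}`: it is asymptotically free for `E` and exhausts
the mass of `P`, so maximizers of `C + P` have nothing to gain from `P`. -/
theorem isMaxOn_of_isMaxOn_add {E C P : (Ω → ℝ) → ℝ} (hE : IsSublinearOp E) {α : ℝ} (hα : 0 < α)
    (hCmono : MonotoneOn C {X | MemX X})
    (hCsmul : ∀ c : ℝ, 0 ≤ c → ∀ X : Ω → ℝ, MemX X → C (c • X) = c * C X)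
    (hPmono : MonotoneOn P {X | MemX X})
    {I : ℕ → Ω → ℝ} (hI : ∀ n, MemX (I n)) (hI01 : ∀ n ω, I n ω ∈ Set.Icc 0 1)
    (hEI : Tendsto (fun n => E (I n)) atTop (𝓝 0))
    (hPI : Tendsto (fun n => P (I n)) atTop (𝓝 (P fun _ => 1)))
    {X₀ : Ω → ℝ} (hX₀ : X₀ ∈ testSet E α)
    (hmax : IsMaxOn (fun X => C X + P X) (testSet E α) X₀) :
    IsMaxOn C (testSet E α) X₀ := by
  intro X hX
  let ε : ℕ → ℝ := fun n => E (I n) / α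
  have hε : Tendsto ε atTop (𝓝 0) := by simpa using hEI.div_const α
  have hlim : Tendsto (fun n => (1 - ε n) * C X + P (I n)) atTop (𝓝 (C X + P fun _ => 1)) := by
    simpa using ((hε.const_sub 1).mul_const (C X)).add hPI
  have hbound : ∀ᶠ n in atTop, (1 - ε n) * C X + P (I n) ≤ C X₀ + P fun _ => 1 := by
    filter_upwards [hε.eventually_le_const zero_lt_one] with n hn
    have hε0 : 0 ≤ ε n := div_nonneg (hE.nonneg (hI n) fun ω => (hI01 n ω).1) hα.le
    have hδ : 0 ≤ 1 - ε n := sub_nonneg.2 hn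
    have hY : (1 - ε n) • X ⊔ I n ∈ testSet E α :=
      smul_sup_mem_testSet hE hε0 hn hX (hI n) (hI01 n) (div_mul_cancel₀ _ hα.ne').ge
    calc (1 - ε n) * C X + P (I n)
        = C ((1 - ε n) • X) + P (I n) := by rw [hCsmul _ hδ X hX.1]
      _ ≤ C ((1 - ε n) • X ⊔ I n) + P ((1 - ε n) • X ⊔ I n) :=
        add_le_add (hCmono (hX.1.const_smul _) hY.1 le_sup_left) (hPmono (hI n) hY.1 le_sup_right)
      _ ≤ C X₀ + P X₀ := hmax hY
      _ ≤ C X₀ + P fun _ => 1 := by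
        gcongr
        exact hPmono hX₀.1 (memX_const 1) fun ω => (hX₀.2.1 ω).2
  exact le_of_add_le_add_right (le_of_tendsto hlim hbound)

theorem HypH1.tendsto_zero {E F : (Ω → ℝ) → ℝ} (hH1 : HypH1 E F) (hF : IsSublinearOp F)
    {A : ℕ → Set Ω} (hAmeas : ∀ n, MeasurableSet (A n)) (hAanti : Antitone A)
    (hAempty : (⋂ n, A n) = ∅) {u : ℕ → ℝ} {c : ℝ} (hc : 0 < c) (hu : Tendsto u atTop (𝓝 c))
    (huF : ∀ n, u n ≤ F ((A n).indicator fun _ => (1 : ℝ))) :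
    Tendsto (fun n => E ((A n).indicator fun _ => (1 : ℝ))) atTop (𝓝 0) := by
  have hI (n : ℕ) := memX_indicator_one (hAmeas n)
  have hanti : Antitone fun n => F ((A n).indicator fun _ => (1 : ℝ)) := fun m n hmn =>
    hF.monotoneOn (hI n) (hI m) <|
      Set.indicator_le_indicator_of_subset (hAanti hmn) fun _ => zero_le_one
  have hbdd : BddBelow (Set.range fun n => F ((A n).indicator fun _ => (1 : ℝ))) :=
    ⟨0, Set.forall_mem_range.2 fun n =>
      hF.nonneg (hI n) fun ω => (indicator_one_mem_Icc (A n) ω).1⟩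
  have hlim := tendsto_atTop_ciInf hanti hbdd
  exact hH1 A hAmeas hAanti hAempty _ hlim
    (hc.trans_le (le_of_tendsto_of_tendsto' hu hlim huF)).ne'

theorem Dominated.conjOp_le {L ρ : (Ω → ℝ) → ℝ} (hdom : Dominated L ρ) (hL : IsLinearOp L)
    {X : Ω → ℝ} (hX : MemX X) : conjOp ρ X ≤ L X :=
  neg_le.2 (hL.map_neg hX ▸ hdom (-X) hX.neg)

theorem bddAbove_image_testSet {E F Q : (Ω → ℝ) → ℝ} {α : ℝ} (hF : IsSublinearOp F)
    (hdom : Dominated Q F) : BddAbove (Q '' testSet E α) := by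
  refine ⟨1, Set.forall_mem_image.2 fun X hX => ?_⟩
  calc Q X ≤ F X := hdom X hX.1
    _ ≤ F (fun _ => 1) := hF.monotoneOn hX.1 (memX_const 1) fun ω => (hX.2.1 ω).2
    _ = 1 := hF.2.1 1

theorem isMaxOn_of_conjOp_eq_sSup {E F Q : (Ω → ℝ) → ℝ} {α : ℝ} (hF : IsSublinearOp F)
    (hQ : IsLinearOp Q) (hdom : Dominated Q F)
    (hsup : sSup (Q '' testSet E α) = sSup (conjOp F '' testSet E α))
    {X₀ : Ω → ℝ} (hX₀ : X₀ ∈ testSet E α)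
    (hopt : conjOp F X₀ = sSup (conjOp F '' testSet E α)) :
    IsMaxOn Q (testSet E α) X₀ := fun X hX =>
  calc Q X ≤ sSup (Q '' testSet E α) :=
        le_csSup (bddAbove_image_testSet hF hdom) (Set.mem_image_of_mem Q hX)
    _ = conjOp F X₀ := hsup.trans hopt.symm
    _ ≤ Q X₀ := hdom.conjOp_le hQ hX₀.1

theorem IsLinearOp.of_eq_add {L C P : (Ω → ℝ) → ℝ} (hC : IsLinearOp C) (hP : IsLinearOp P)
    (hL : ∀ X, MemX X → L X = C X + P X) : IsLinearOp L := by
  refine ⟨fun X Y hX hY => ?_, fun c X hX => ?_⟩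
  · rw [hL _ (hX.add hY), hL X hX, hL Y hY, hC.1 X Y hX hY, hP.1 X Y hX hY, add_add_add_comm]
  · rw [hL _ (hX.const_smul c), hL X hX, hC.2 c X hX, hP.2 c X hX, mul_add]

theorem optimal_solves_countable_part_general {E F : (Ω → ℝ) → ℝ}
    (hE : IsSublinearOp E) (hF : IsSublinearOp F) {α : ℝ} (hα : 0 < α)
    {lam : ℝ} (hlam0 : 0 ≤ lam) (hlam1 : lam ≤ 1) {Qc Qp Q : (Ω → ℝ) → ℝ}
    (hQc : IsPositiveLinearOp Qc) (hQp : IsPositiveLinearOp Qp)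
    (hQpone : Qp (fun _ => 1) = 1) (hQppure : PureAdditive Qp)
    (hdom : Dominated Q F) (hsup : sSup (Q '' testSet E α) = sSup (conjOp F '' testSet E α))
    (hdec : ∀ X, MemX X → Q X = lam * Qc X + (1 - lam) * Qp X) (hH1 : HypH1 E F)
    {X₀ : Ω → ℝ} (hX₀ : X₀ ∈ testSet E α)
    (hopt : conjOp F X₀ = sSup (conjOp F '' testSet E α)) :
    IsMaxOn (fun X => lam * Qc X) (testSet E α) X₀ := by
  have hC := hQc.const_mul hlam0
  have hP := hQp.const_mul (sub_nonneg.2 hlam1)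
  have hmaxQ : IsMaxOn Q (testSet E α) X₀ :=
    isMaxOn_of_conjOp_eq_sSup hF (hC.isLinearOp.of_eq_add hP.isLinearOp hdec) hdom hsup hX₀ hopt
  have hmax : IsMaxOn (fun X => lam * Qc X + (1 - lam) * Qp X) (testSet E α) X₀ :=
    fun X hX => (hdec X hX.1).ge.trans ((hmaxQ hX).trans_eq (hdec X₀ hX₀.1))
  rcases hlam1.eq_or_lt with rfl | hlt
  · simpa using hmax
  obtain ⟨A, hAmeas, hAanti, hAempty, hQpA⟩ := hQppure
  have hI (n : ℕ) := memX_indicator_one (hAmeas n)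
  have hPA := hQpA.const_mul (1 - lam)
  have hPF (n : ℕ) : (1 - lam) * Qp ((A n).indicator fun _ => 1) ≤
      F ((A n).indicator fun _ => 1) :=
    (le_add_of_nonneg_left (hC.nonneg _ (hI n) fun ω => (indicator_one_mem_Icc _ ω).1)).trans
      ((hdec _ (hI n)).ge.trans (hdom _ (hI n)))
  have hEA := hH1.tendsto_zero hF hAmeas hAanti hAempty (by linarith) hPA hPF
  exact isMaxOn_of_isMaxOn_add hE hα hC.monotoneOn (fun c _ => hC.isLinearOp.2 c) hP.monotoneOn hI
    (fun n => indicator_one_mem_Icc (A n)) hEA (by simpa only [hQpone] using hPA) hX₀ hmax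

end

/-- Theorem 4.1: under (H1) and (H2), any optimal solution of Problem 2.1 is also an
optimal solution of problem (4.3), i.e. it maximizes `E_{λQ_α^c}` over `𝒳_α`. -/
theorem optimal_solves_countable_part {Ω : Type*} [MeasurableSpace Ω]
    (Emu Eups : (Ω → ℝ) → ℝ)
    (hEmu : IsSublinearOp Emu) (hEups : IsSublinearOp Eups)
    (α : ℝ) (hα0 : 0 < α) (hα1 : α < 1)
    (lam : ℝ) (hlam0 : 0 ≤ lam) (hlam1 : lam ≤ 1)
    (Qc : Measure Ω) (hQc : IsProbabilityMeasure Qc)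
    (Qp : (Ω → ℝ) → ℝ) (hQplin : IsLinearOp Qp)
    (hQppos : ∀ X : Ω → ℝ, MemX X → (∀ ω, 0 ≤ X ω) → 0 ≤ Qp X)
    (hQpone : Qp (fun _ => 1) = 1) (hQppure : PureAdditive Qp)
    (Qa : (Ω → ℝ) → ℝ) (hQalin : IsLinearOp Qa) (hQadom : Dominated Qa Eups)
    (hQasup : sSup (Qa '' testSet Emu α) = sSup (conjOp Eups '' testSet Emu α))
    (hQadec : ∀ X : Ω → ℝ, MemX X → Qa X = lam * ∫ ω, X ω ∂Qc + (1 - lam) * Qp X)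
    (hH1 : HypH1 Emu Eups) (hH2 : HypH2 Emu α)
    (Xa : Ω → ℝ) (hXa : Xa ∈ testSet Emu α)
    (hXopt : conjOp Eups Xa = sSup (conjOp Eups '' testSet Emu α)) :
    lam * ∫ ω, Xa ω ∂Qc =
      sSup ((fun X : Ω → ℝ => lam * ∫ ω, X ω ∂Qc) '' testSet Emu α) := by
  have hmax := optimal_solves_countable_part_general hEmu hEups hα0 hlam0 hlam1
    (isPositiveLinearOp_integral Qc) ⟨hQplin, hQppos⟩ hQpone hQppure hQadom hQasup hQadec hH1
    hXa hXopt
  rw [sSup_image', hmax.iSup_eq hXa]
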